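/- There exist a constant c > 0 and a real number X₀ such that for all real X ≥ X₀, the number of negative squarefree integers d such that the absolute value of the discriminant of the imaginary quadratic field ℚ(√d) is at most X and the ideal class group Cl(ℚ(√d)) contains a subgroup isomorphic to (ℤ/5ℤ)² is at least c · X^(1/3) / (log X)². -/

import Mathlib

open NumberField

/-- `d` is a negative squarefree integer such that the imaginary quadratic field
`ℚ(√d)` (characterized as a degree-2 number field containing a square root of `d`)
has `|discriminant| ≤ X` and its ideal class group contains a subgroup isomorphic
to `(ℤ/5ℤ)²`. -/
def GoodRank5sq (X : ℝ) (d : ℤ) : Prop :=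
  d < 0 ∧ Squarefree d ∧
  ∀ (K : Type) [Field K] [NumberField K],
    (∃ x : K, x * x = (d : K)) → Module.finrank ℚ K = 2 →
      (|NumberField.discr K| : ℝ) ≤ X ∧
      ∃ f : Multiplicative (ZMod 5 × ZMod 5) →* ClassGroup (𝓞 K), Function.Injective f


lemma rat_int_of_sq_mul (d : ℤ) (hd : Squarefree d) (b : ℚ) (e : ℤ) (h : b ^ 2 * d = e) :
    ∃ c : ℤ, b = c := by
  have hb : (b.den : ℚ) ≠ 0 := by exact_mod_cast b.den_nz
  have h1 : (b.num : ℚ) ^ 2 * d = e * (b.den : ℚ) ^ 2 := by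
    rw [← h]
    nth_rewrite 2 [← Rat.num_div_den b]
    field_simp
  have h2 : b.num ^ 2 * d = e * (b.den : ℤ) ^ 2 := by exact_mod_cast h1
  have hcop : IsCoprime ((b.den : ℤ) ^ 2) (b.num ^ 2) := by
    apply IsCoprime.pow
    rw [Int.isCoprime_iff_gcd_eq_one, Int.gcd_comm]
    exact b.reduced
  have h3 : (b.den : ℤ) ^ 2 ∣ d := by
    apply hcop.dvd_of_dvd_mul_left
    rw [h2]; exact dvd_mul_left _ _
  rw [pow_two] at h3
  have h4 := hd _ h3
  have h5 : b.den = 1 := by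
    have := Int.isUnit_iff.1 h4
    omega
  exact ⟨b.num, by rw [← Rat.num_div_den b]; simp [h5]⟩

section field
variable {K : Type} [Field K] [NumberField K]

lemma irr_of {d : ℤ} (hd : d < 0) {x : K} (hx : x * x = (d : K)) (q : ℚ) : x ≠ (q : K) := by
  intro h
  rw [h] at hx
  have : q * q = (d : ℚ) := by exact_mod_cast hx
  have h2 : (d : ℚ) < 0 := by exact_mod_cast hd
  nlinarith [mul_self_nonneg q]

lemma exists_coords {d : ℤ} (hd : d < 0) {x : K} (hx : x * x = (d : K))
    (hK : Module.finrank ℚ K = 2) (z : K) : ∃ a b : ℚ, z = (a : K) + (b : K) * x := by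
  have hli : LinearIndependent ℚ ![(1 : K), x] := by
    rw [LinearIndependent.pair_iff]
    intro s t h
    by_cases ht : t = 0
    · subst ht
      simp [Algebra.smul_def] at h
      exact ⟨h, rfl⟩
    · exfalso
      apply irr_of hd hx (-s / t)
      have ht' : (t : K) ≠ 0 := by exact_mod_cast ht
      simp only [Algebra.smul_def, eq_ratCast, mul_one] at h
      push_cast
      field_simp
      linear_combination h
  let b := basisOfLinearIndependentOfCardEqFinrank hli (by simp [hK])
  have h := b.sum_repr z
  simp only [Fin.sum_univ_two] at h
  refine ⟨b.repr z 0, b.repr z 1, ?_⟩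
  have e0 : b 0 = 1 := by simp [b]
  have e1 : b 1 = x := by simp [b]
  rw [e0, e1] at h
  simp only [Algebra.smul_def, eq_ratCast, mul_one] at h
  exact h.symm

lemma finrank_int (hK : Module.finrank ℚ K = 2) : Module.finrank ℤ (𝓞 K) = 2 := by
  rw [RingOfIntegers.rank, hK]

lemma cayley (hK : Module.finrank ℚ K = 2) (z : 𝓞 K) :
    ∃ N : ℤ, z ^ 2 - (Algebra.trace ℤ (𝓞 K) z : 𝓞 K) * z + (N : 𝓞 K) = 0 := by
  let b : Module.Basis (Fin 2) ℤ (𝓞 K) := Module.finBasisOfFinrankEq ℤ (𝓞 K) (finrank_int hK)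
  let A := Algebra.leftMulMatrix b z
  refine ⟨A.det, ?_⟩
  have h := Matrix.aeval_self_charpoly A
  rw [Matrix.charpoly_fin_two] at h
  apply Algebra.leftMulMatrix_injective b
  rw [Algebra.trace_eq_matrix_trace b]
  simp only [map_add, map_sub, map_pow, map_mul, map_zero, Polynomial.aeval_X,
    Polynomial.aeval_C, map_intCast] at h ⊢
  rw [← h]
  simp only [A, algebraMap_int_eq, eq_intCast]

lemma int_coords {d : ℤ} (hd : d < 0) (hsf : Squarefree d) {D : 𝓞 K} (hD : D * D = (d : 𝓞 K))
    (hK : Module.finrank ℚ K = 2) (z : 𝓞 K) :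
    ∃ p q N : ℤ, 2 * z = (p : 𝓞 K) + (q : 𝓞 K) * D ∧ p ^ 2 - d * q ^ 2 = 4 * N := by
  have hx : (D : K) * (D : K) = (d : K) := by
    have := congrArg (fun y : 𝓞 K => (y : K)) hD
    simpa using this
  obtain ⟨N, hN⟩ := cayley hK z
  set t := Algebra.trace ℤ (𝓞 K) z with ht
  have hNK : (z : K) ^ 2 - (t : K) * z + (N : K) = 0 := by
    have := congrArg (fun y : 𝓞 K => (y : K)) hN
    simpa using this
  obtain ⟨a, b, hab⟩ := exists_coords hd hx hK (z : K)
  have key : (2 * a - t) ^ 2 + (2 * b) ^ 2 * d - (t ^ 2 - 4 * N) + (2 * (2 * a - t) * (2 * b) : ℚ) * (D : K) = 0 := by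
    rw [hab] at hNK
    push_cast
    linear_combination 4 * hNK - 4 * (b : K) ^ 2 * hx
  have hz : (2 * (2 * a - t) * (2 * b) : ℚ) = 0 := by
    by_contra hne
    have hne' : ((2 * (2 * a - t) * (2 * b) : ℚ) : K) ≠ 0 := by exact_mod_cast hne
    apply irr_of hd hx (-((2 * a - t) ^ 2 + (2 * b) ^ 2 * d - (t ^ 2 - 4 * N)) / (2 * (2 * a - t) * (2 * b)))
    rw [Rat.cast_div, eq_div_iff hne']
    push_cast at key ⊢
    linear_combination key
  have key2 : (2 * a - t) ^ 2 + (2 * b) ^ 2 * d = ((t ^ 2 - 4 * N : ℤ) : ℚ) := by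
    rw [hz] at key
    simp only [Rat.cast_zero, zero_mul, add_zero] at key
    push_cast
    have : (((2 * a - t) ^ 2 + (2 * b) ^ 2 * d - (t ^ 2 - 4 * N) : ℚ) : K) = 0 := by
      push_cast; exact key
    have := (Rat.cast_eq_zero (α := K)).1 this
    linarith
  have hz' : 2 * a - t = 0 ∨ b = 0 := by
    rcases mul_eq_zero.1 hz with h | h
    · left; simpa using h
    · right; simpa using h
  rcases hz' with h | h
  · obtain ⟨c, hc⟩ := rat_int_of_sq_mul d hsf (2 * b) (t ^ 2 - 4 * N) (by rw [← key2, h]; ring)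
    refine ⟨t, c, N, ?_, ?_⟩
    · apply RingOfIntegers.ext
      have h1 : (2 * b : K) = (c : K) := by exact_mod_cast congrArg (fun y : ℚ => (y : K)) hc
      have h2 : (2 * a : K) = (t : K) := by
        have : 2 * a = t := by linarith
        exact_mod_cast congrArg (fun y : ℚ => (y : K)) this
      simp only [map_mul, map_add, map_intCast, map_ofNat]
      change 2 * (z : K) = (t : K) + (c : K) * (D : K)
      rw [hab]
      linear_combination h2 + (D : K) * h1
    · rw [h, hc] at key2
      have : (0 : ℤ) ^ 2 + c ^ 2 * d = t ^ 2 - 4 * N := by exact_mod_cast key2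
      linarith
  · obtain ⟨c, hc⟩ := rat_int_of_sq_mul 1 squarefree_one (2 * a - t) (t ^ 2 - 4 * N) (by rw [← key2, h]; simp)
    have hc2 : c ^ 2 = t ^ 2 - 4 * N := by
      rw [h, hc] at key2
      have : c ^ 2 + (2 * 0) ^ 2 * d = t ^ 2 - 4 * N := by exact_mod_cast key2
      linarith
    have hpar : Even (t + c) := by
      have : Even (c ^ 2 + t ^ 2) := by
        rw [hc2]; exact ⟨t ^ 2 - 2 * N, by ring⟩
      simp [Int.even_add, Int.even_pow] at this ⊢
      tauto
    obtain ⟨e, he⟩ := hpar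
    refine ⟨t + c, 0, e ^ 2, ?_, ?_⟩
    · apply RingOfIntegers.ext
      have h2 : (2 * a : K) = (t : K) + c := by
        have : 2 * a = t + c := by linarith
        exact_mod_cast congrArg (fun y : ℚ => (y : K)) this
      simp only [map_mul, map_add, map_intCast, map_ofNat]
      change 2 * (z : K) = ((t + c : ℤ) : K) + ((0 : ℤ) : K) * (D : K)
      rw [hab, h]
      push_cast
      linear_combination h2
    · rw [he]; ring

lemma D_irr {d : ℤ} (hd : d < 0) {D : 𝓞 K} (hD : D * D = (d : 𝓞 K)) {p q : ℤ}
    (h : (p : 𝓞 K) + (q : 𝓞 K) * D = 0) : p = 0 ∧ q = 0 := by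
  have h1 : ((p ^ 2 - q ^ 2 * d : ℤ) : 𝓞 K) = 0 := by
    push_cast
    linear_combination ((p : 𝓞 K) - q * D) * h + q ^ 2 * hD
  have h2 : p ^ 2 - q ^ 2 * d = 0 := by exact_mod_cast h1
  have hq : q = 0 := by
    by_contra hne
    have : 0 < q ^ 2 := by positivity
    nlinarith [sq_nonneg p]
  subst hq
  simp at h2
  exact ⟨h2, rfl⟩

lemma unit_pm {d : ℤ} (hd : d < -16) (hsf : Squarefree d) {D : 𝓞 K} (hD : D * D = (d : 𝓞 K))
    (hK : Module.finrank ℚ K = 2) (u v : 𝓞 K) (huv : u * v = 1) : u = 1 ∨ u = -1 := by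
  have hd0 : d < 0 := by linarith
  obtain ⟨p, q, N, h1, h2⟩ := int_coords hd0 hsf hD hK u
  obtain ⟨p', q', N', h1', h2'⟩ := int_coords hd0 hsf hD hK v
  have e : ((p * p' + q * q' * d - 4 : ℤ) : 𝓞 K) + ((p * q' + q * p' : ℤ) : 𝓞 K) * D = 0 := by
    push_cast
    linear_combination (-(p' + q' * D)) * h1 - 2 * u * h1' + 4 * huv - (q * q' : 𝓞 K) * hD
  obtain ⟨e1, e2⟩ := D_irr hd0 hD e
  have e3 : (p ^ 2 - d * q ^ 2) * (p' ^ 2 - d * q' ^ 2) = 16 := by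
    have : p * p' + q * q' * d = 4 := by linarith
    have h3 : (p * p' + q * q' * d) ^ 2 - d * (p * q' + q * p') ^ 2 = 16 := by rw [this, e2]; ring
    linarith
  have e4 : N * N' = 1 := by rw [h2, h2'] at e3; linarith
  have hN : 0 ≤ 4 * N := by rw [← h2]; nlinarith [sq_nonneg p, sq_nonneg q]
  have hN1 : N = 1 := by
    rcases Int.mul_eq_one_iff_eq_one_or_neg_one.1 e4 with h | h
    · exact h.1
    · omega
  have hq : q = 0 := by
    by_contra hne
    have : 1 ≤ q ^ 2 := by have : 0 < q ^ 2 := by positivity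
                           omega
    nlinarith [sq_nonneg p]
  have hp : p = 2 ∨ p = -2 := by
    rw [hq, hN1] at h2
    have : (p - 2) * (p + 2) = 0 := by linarith
    rcases mul_eq_zero.1 this with h | h
    · left; linarith
    · right; linarith
  have two : (2 : 𝓞 K) ≠ 0 := two_ne_zero
  rcases hp with h | h
  · left; apply mul_left_cancel₀ two; rw [h1, h, hq]; simp
  · right; apply mul_left_cancel₀ two; rw [h1, h, hq]; simp

lemma discr_rel {d : ℤ} (hd : d < 0) {D : 𝓞 K} (hD : D * D = (d : 𝓞 K))
    (hK : Module.finrank ℚ K = 2) : ∃ k : ℤ, 4 * d = NumberField.discr K * k ^ 2 := by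
  let b : Module.Basis (Fin 2) ℤ (𝓞 K) := Module.finBasisOfFinrankEq ℤ (𝓞 K) (finrank_int hK)
  have tr1 : Algebra.trace ℤ (𝓞 K) 1 = 2 := by
    have := Algebra.trace_algebraMap (R := ℤ) (S := 𝓞 K) 1
    rw [map_one, finrank_int hK] at this
    simpa using this
  have trd : Algebra.trace ℤ (𝓞 K) (d : 𝓞 K) = 2 * d := by
    have := Algebra.trace_algebraMap (R := ℤ) (S := 𝓞 K) d
    rw [finrank_int hK] at this
    simpa using this
  have trD : Algebra.trace ℤ (𝓞 K) D = 0 := by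
    obtain ⟨N, hN⟩ := cayley hK D
    have : ((d + N : ℤ) : 𝓞 K) + ((-(Algebra.trace ℤ (𝓞 K) D) : ℤ) : 𝓞 K) * D = 0 := by
      push_cast
      linear_combination hN - hD
    have := (D_irr hd hD this).2
    linarith
  let P := b.toMatrix ![1, D]
  refine ⟨P.det, ?_⟩
  have h1 : Algebra.discr ℤ ![(1 : 𝓞 K), D] = 4 * d := by
    rw [Algebra.discr_def, Matrix.det_fin_two]
    simp [Algebra.traceMatrix_apply, Algebra.traceForm_apply, hD, tr1, trd, trD]
    ring
  have h2 : Algebra.discr ℤ ![(1 : 𝓞 K), D] = P.det ^ 2 * Algebra.discr ℤ b := by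
    rw [← Algebra.discr_of_matrix_vecMul]
    congr 1
    have := b.toMatrix_map_vecMul (![1, D] : Fin 2 → 𝓞 K)
    rw [← this]
  rw [← NumberField.discr_eq_discr K b, ← h1, h2]
  ring

end field

lemma hom_of_indep {G : Type*} [CommGroup G] (x y : G) (hx : x ^ 5 = 1) (hy : y ^ 5 = 1)
    (h : ∀ i j : ℕ, i < 5 → j < 5 → x ^ i * y ^ j = 1 → i = 0 ∧ j = 0) :
    ∃ f : Multiplicative (ZMod 5 × ZMod 5) →* G, Function.Injective f := by
  refine ⟨⟨⟨fun a => x ^ (Multiplicative.toAdd a).1.val * y ^ (Multiplicative.toAdd a).2.val,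
    by simp⟩, ?_⟩, ?_⟩
  · intro a b
    simp only [toAdd_mul, Prod.fst_add, Prod.snd_add, ZMod.val_add]
    rw [← pow_eq_pow_mod _ hx, ← pow_eq_pow_mod _ hy, pow_add, pow_add]
    exact mul_mul_mul_comm _ _ _ _
  · rw [injective_iff_map_eq_one]
    intro a ha
    obtain ⟨h1, h2⟩ := h _ _ (ZMod.val_lt (Multiplicative.toAdd a).1)
      (ZMod.val_lt (Multiplicative.toAdd a).2) ha
    have h3 := (ZMod.val_eq_zero _).1 h1
    have h4 := (ZMod.val_eq_zero _).1 h2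
    apply Multiplicative.toAdd.injective
    exact Prod.ext h3 h4

lemma ideal_pow {R : Type*} [CommRing R] [IsDedekindDomain R] (a b : R) (n : R)
    (hab : IsCoprime a b) (h : a * b = n ^ 5) :
    ∃ I : Ideal R, Ideal.span {a} = I ^ 5 := by
  have h1 : IsCoprime (Ideal.span {a}) (Ideal.span {b}) :=
    (Ideal.isCoprime_span_singleton_iff a b).2 hab
  have h2 : Ideal.span {a} * Ideal.span {b} = (Ideal.span {n}) ^ 5 := by
    rw [Ideal.span_singleton_mul_span_singleton, h, Ideal.span_singleton_pow]
  exact exists_eq_pow_of_mul_eq_pow_of_coprime h1 h2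

lemma class_rank {R : Type*} [CommRing R] [IsDedekindDomain R]
    (hu : ∀ u v : R, u * v = 1 → u = 1 ∨ u = -1)
    (a b a' b' n k : R) (ha0 : a ≠ 0) (hb0 : b ≠ 0)
    (hca : IsCoprime a a') (hcb : IsCoprime b b')
    (ha : a * a' = n ^ 5) (hb : b * b' = k ^ 5)
    (hind : ∀ i j : ℕ, i < 5 → j < 5 → (∃ c : R, a ^ i * b ^ j = c ^ 5) → i = 0 ∧ j = 0) :
    ∃ f : Multiplicative (ZMod 5 × ZMod 5) →* ClassGroup R, Function.Injective f := by
  obtain ⟨I, hI⟩ := ideal_pow a a' n hca ha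
  obtain ⟨J, hJ⟩ := ideal_pow b b' k hcb hb
  have hI0 : I ≠ 0 := by
    rintro rfl
    rw [zero_pow (by norm_num)] at hI
    exact ha0 (Ideal.span_singleton_eq_bot.1 hI)
  have hJ0 : J ≠ 0 := by
    rintro rfl
    rw [zero_pow (by norm_num)] at hJ
    exact hb0 (Ideal.span_singleton_eq_bot.1 hJ)
  let I' : nonZeroDivisors (Ideal R) := ⟨I, mem_nonZeroDivisors_of_ne_zero hI0⟩
  let J' : nonZeroDivisors (Ideal R) := ⟨J, mem_nonZeroDivisors_of_ne_zero hJ0⟩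
  have key : ∀ L : nonZeroDivisors (Ideal R), ClassGroup.mk0 L = 1 ↔ (L : Ideal R).IsPrincipal :=
    fun L => by
      obtain ⟨L, hL⟩ := L
      exact ClassGroup.mk0_eq_one_iff hL
  have eI : (I' : Ideal R) = I := rfl
  have eJ : (J' : Ideal R) = J := rfl
  clear_value I' J'
  apply hom_of_indep (ClassGroup.mk0 I') (ClassGroup.mk0 J')
  · rw [← map_pow, key, SubmonoidClass.coe_pow, eI, ← hI]
    exact ⟨a, rfl⟩
  · rw [← map_pow, key, SubmonoidClass.coe_pow, eJ, ← hJ]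
    exact ⟨b, rfl⟩
  · intro i j hi hj hij
    apply hind i j hi hj
    rw [← map_pow, ← map_pow, ← map_mul] at hij
    rw [key, Submonoid.coe_mul, SubmonoidClass.coe_pow, SubmonoidClass.coe_pow, eI, eJ] at hij
    obtain ⟨c, hc⟩ := hij
    change I ^ i * J ^ j = Ideal.span {c} at hc
    have h1 : Ideal.span {a ^ i * b ^ j} = Ideal.span {c ^ 5} := by
      rw [← Ideal.span_singleton_pow, ← hc, ← Ideal.span_singleton_mul_span_singleton,
        ← Ideal.span_singleton_pow, ← Ideal.span_singleton_pow, hI, hJ]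
      ring
    rw [Ideal.span_singleton_eq_span_singleton] at h1
    obtain ⟨u, hu'⟩ := h1.symm
    rcases hu u (↑u⁻¹) (by simp) with h | h
    · exact ⟨c, by rw [← hu', h]; ring⟩
    · exact ⟨-c, by rw [← hu', h]; ring⟩

section polys
variable {R : Type*} [CommRing R]

/-- `S T` times a quartic form: the discriminant form (up to squares). -/
def pD (S T : R) : R :=
  -6 * S * T * (T ^ 4 + 5034 * S * T ^ 3 + 5162 * 4608 * S ^ 2 * T ^ 2
    + 5034 * 2304 ^ 2 * S ^ 3 * T + 2304 ^ 4 * S ^ 4)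

def pP (S T : R) : R :=
  T ^ 4 - 136716 * S * T ^ 3 - 100629504 * S ^ 2 * T ^ 2 - 136716 * 2304 ^ 2 * S ^ 3 * T
    + 2304 ^ 4 * S ^ 4

def pX1 (S T : R) : R := (T - 2304 * S) * pP S T

def pY1 (S T : R) : R := 250 * (T ^ 2 - 31 * 768 * S * T + 2304 ^ 2 * S ^ 2)

def pN (S T : R) : R := T ^ 2 + 101 * 192 * S * T + 2304 ^ 2 * S ^ 2

def pR (S T : R) : R :=
  T ^ 4 - 268716 * S * T ^ 3 + 81902 * 27648 * S ^ 2 * T ^ 2 - 268716 * 2304 ^ 2 * S ^ 3 * T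
    + 2304 ^ 4 * S ^ 4

def pX2 (S T : R) : R := (T + 2304 * S) * pR S T

def pY2 (S T : R) : R := 114 * (3 * T ^ 2 - 554 * 256 * S * T + 3 * 2304 ^ 2 * S ^ 2)

def pk (S T : R) : R := T ^ 2 + 44 * 768 * S * T + 2304 ^ 2 * S ^ 2

lemma ident1 (S T : R) : pX1 S T ^ 2 - pD S T * pY1 S T ^ 2 = pN S T ^ 5 := by
  simp only [pX1, pD, pY1, pN, pP]; ring

lemma ident2 (S T : R) : pX2 S T ^ 2 - pD S T * pY2 S T ^ 2 = pk S T ^ 5 := by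
  simp only [pX2, pD, pY2, pk, pR]; ring

lemma diag_D (T : R) : pD T T = T ^ 6 * pD 1 1 := by simp only [pD]; ring
lemma diag_X1 (T : R) : pX1 T T = T ^ 5 * pX1 1 1 := by simp only [pX1, pP]; ring
lemma diag_Y1 (T : R) : pY1 T T = T ^ 2 * pY1 1 1 := by simp only [pY1]; ring
lemma diag_X2 (T : R) : pX2 T T = T ^ 5 * pX2 1 1 := by simp only [pX2, pR]; ring
lemma diag_Y2 (T : R) : pY2 T T = T ^ 2 * pY2 1 1 := by simp only [pY2]; ring
lemma diag_k (T : R) : pk T T = T ^ 2 * pk 1 1 := by simp only [pk]; ring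

lemma cast_D (S T : ℤ) : ((pD S T : ℤ) : R) = pD (S : R) (T : R) := by
  simp only [pD]; push_cast; ring
lemma cast_X1 (S T : ℤ) : ((pX1 S T : ℤ) : R) = pX1 (S : R) (T : R) := by
  simp only [pX1, pP]; push_cast; ring
lemma cast_Y1 (S T : ℤ) : ((pY1 S T : ℤ) : R) = pY1 (S : R) (T : R) := by
  simp only [pY1]; push_cast; ring
lemma cast_X2 (S T : ℤ) : ((pX2 S T : ℤ) : R) = pX2 (S : R) (T : R) := by
  simp only [pX2, pR]; push_cast; ring
lemma cast_Y2 (S T : ℤ) : ((pY2 S T : ℤ) : R) = pY2 (S : R) (T : R) := by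
  simp only [pY2]; push_cast; ring
lemma cast_k (S T : ℤ) : ((pk S T : ℤ) : R) = pk (S : R) (T : R) := by
  simp only [pk]; push_cast; ring

end polys

lemma red (q : ℕ) [Fact q.Prime] (h2 : (2 : ZMod q) ≠ 0) (w0 : ZMod q)
    (hw : w0 * w0 = pD 1 1) (hw0 : w0 ≠ 0) (S T d m : ℤ) (hST : (S : ZMod q) = T)
    (hT : (T : ZMod q) ≠ 0) (hd : d * m ^ 2 = pD S T) (i j : ℕ) (B : ℤ√d)
    (h : 32 * (⟨pX1 S T, pY1 S T * m⟩ : ℤ√d) ^ i * (⟨pX2 S T, pY2 S T * m⟩ : ℤ√d) ^ j = B ^ 5) :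
    ∃ c : ZMod q, (pX1 1 1 + pY1 1 1 * w0) ^ i * (pX2 1 1 + pY2 1 1 * w0) ^ j = c ^ 5 := by
  have hdm : (d : ZMod q) * (m : ZMod q) ^ 2 = (T : ZMod q) ^ 6 * (w0 * w0) := by
    have h4 : ((d * m ^ 2 : ℤ) : ZMod q) = ((pD S T : ℤ) : ZMod q) := by rw [hd]
    rw [cast_D, hST, diag_D] at h4
    rw [hw, ← h4]; push_cast; ring
  have hm : (m : ZMod q) ≠ 0 := by
    intro h0
    rw [h0] at hdm
    have : (T : ZMod q) ^ 6 * (w0 * w0) ≠ 0 :=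
      mul_ne_zero (pow_ne_zero _ hT) (mul_ne_zero hw0 hw0)
    apply this; rw [← hdm]; ring
  let ρ : ZMod q := w0 * T ^ 3 / m
  have hρ : ρ * ρ = (d : ZMod q) := by
    simp only [ρ]; field_simp; linear_combination -hdm
  have hρm : (m : ZMod q) * ρ = w0 * T ^ 3 := by simp only [ρ]; field_simp
  have h3 := congrArg (Zsqrtd.lift ⟨ρ, hρ⟩) h
  simp only [map_mul, map_pow, Zsqrtd.lift_apply_apply, map_ofNat] at h3
  have e1 : ((pX1 S T : ℤ) : ZMod q) + ((pY1 S T * m : ℤ) : ZMod q) * ρ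
      = T ^ 5 * (pX1 1 1 + pY1 1 1 * w0) := by
    push_cast
    rw [cast_X1, cast_Y1, hST, diag_X1, diag_Y1, mul_assoc, hρm]; ring
  have e2 : ((pX2 S T : ℤ) : ZMod q) + ((pY2 S T * m : ℤ) : ZMod q) * ρ
      = T ^ 5 * (pX2 1 1 + pY2 1 1 * w0) := by
    push_cast
    rw [cast_X2, cast_Y2, hST, diag_X2, diag_Y2, mul_assoc, hρm]; ring
  rw [e1, e2, mul_pow, mul_pow] at h3
  refine ⟨(((B.re : ZMod q) + (B.im : ZMod q) * ρ)) / (2 * T ^ (i + j)), ?_⟩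
  rw [div_pow, ← h3, eq_div_iff (pow_ne_zero _ (mul_ne_zero h2 (pow_ne_zero _ hT)))]
  ring

set_option maxRecDepth 100000

lemma dec31a : (pX1 1 1 + pY1 1 1 * 5 : ZMod 31) = 9 := by decide
lemma dec31b : (pX2 1 1 + pY2 1 1 * 5 : ZMod 31) = 22 := by decide
lemma dec31c : ∀ i < 5, ∀ j < 5, (9 : ZMod 31) ^ i * 22 ^ j ≠ 0 ^ 5 := by decide
lemma dec31d : ∀ i < 5, ∀ j < 5, ((9 : ZMod 31) ^ i * 22 ^ j) ^ 6 = 1 →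
    (i + j) % 5 = 0 := by decide
lemma dec31e : (5 : ZMod 31) * 5 = pD 1 1 := by decide
lemma dec31f : (5 : ZMod 31) ≠ 0 := by decide
lemma dec31g : (2 : ZMod 31) ≠ 0 := by decide

lemma char31 (i j : ℕ) (hi : i < 5) (hj : j < 5)
    (h : ∃ c : ZMod 31, (pX1 1 1 + pY1 1 1 * 5) ^ i * (pX2 1 1 + pY2 1 1 * 5) ^ j = c ^ 5) :
    (i + j) % 5 = 0 := by
  obtain ⟨c, hc⟩ := h
  rw [dec31a, dec31b] at hc
  have hc0 : c ≠ 0 := by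
    intro h0
    rw [h0] at hc
    exact dec31c i hi j hj hc
  have : Fact (Nat.Prime 31) := ⟨by norm_num⟩
  have h30 : c ^ 30 = 1 := ZMod.pow_card_sub_one_eq_one hc0
  refine dec31d i hi j hj ?_
  rw [hc, ← pow_mul]
  exact h30

lemma dec131a : (pX1 1 1 + pY1 1 1 * 61 : ZMod 131) = 20 := by decide
lemma dec131b : (pX2 1 1 + pY2 1 1 * 61 : ZMod 131) = 128 := by decide
lemma dec131c : ∀ i < 5, ∀ j < 5, (20 : ZMod 131) ^ i * 128 ^ j ≠ 0 ^ 5 := by decide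
lemma dec131d : ∀ i < 5, ∀ j < 5, ((20 : ZMod 131) ^ i * 128 ^ j) ^ 26 = 1 →
    (3 * i + 2 * j) % 5 = 0 := by decide
lemma dec131e : (61 : ZMod 131) * 61 = pD 1 1 := by decide
lemma dec131f : (61 : ZMod 131) ≠ 0 := by decide
lemma dec131g : (2 : ZMod 131) ≠ 0 := by decide

lemma char131 (i j : ℕ) (hi : i < 5) (hj : j < 5)
    (h : ∃ c : ZMod 131, (pX1 1 1 + pY1 1 1 * 61) ^ i * (pX2 1 1 + pY2 1 1 * 61) ^ j = c ^ 5) :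
    (3 * i + 2 * j) % 5 = 0 := by
  obtain ⟨c, hc⟩ := h
  rw [dec131a, dec131b] at hc
  have hc0 : c ≠ 0 := by
    intro h0
    rw [h0] at hc
    exact dec131c i hi j hj hc
  have : Fact (Nat.Prime 131) := ⟨by norm_num⟩
  have h30 : c ^ 130 = 1 := ZMod.pow_card_sub_one_eq_one hc0
  refine dec131d i hi j hj ?_
  rw [hc, ← pow_mul]
  exact h30

lemma dz1 : (2304 : ZMod 5) = -1 := by decide
lemma dz2 : (2 : ZMod 5) ≠ 0 := by decide
lemma dz3 : (2304 : ZMod 19) = 5 := by decide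
lemma dz4 : (6 : ZMod 19) ≠ 0 := by decide
lemma dz5 : (pk 1 1 : ZMod 5) ≠ 0 := by decide

lemma copz {p : ℕ} {x : ℤ} [Fact p.Prime] (h : (x : ZMod p) ≠ 0) : IsCoprime x (p : ℤ) :=
  ((ZMod.coe_int_isUnit_iff_isCoprime x p).1 (isUnit_iff_ne_zero.2 h)).symm

lemma cop1 (S T : ℤ) (hST : IsCoprime S T) (h2 : IsCoprime T 2) (h3 : IsCoprime T 3)
    (h5 : IsCoprime T 5) (hm : (S : ZMod 5) = T) :
    IsCoprime (2 * pX1 S T) (pN S T ^ 5) := by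
  have : Fact (Nat.Prime 5) := ⟨by norm_num⟩
  have hT5 : (T : ZMod 5) ≠ 0 := by
    intro h0
    have h1 : (5 : ℤ) ∣ T := by exact_mod_cast (ZMod.intCast_zmod_eq_zero_iff_dvd T 5).1 h0
    have := h5.isUnit_of_dvd' h1 dvd_rfl
    exact absurd this (by decide)
  set δ := T - 2304 * S with hδ
  have c2 : IsCoprime δ 2 := by
    have : δ = T + 2 * (-(1152 * S)) := by rw [hδ]; ring
    rw [this]; exact h2.add_mul_left_left _
  have c3 : IsCoprime δ 3 := by
    have : δ = T + 3 * (-(768 * S)) := by rw [hδ]; ring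
    rw [this]; exact h3.add_mul_left_left _
  have c5 : IsCoprime δ 5 := by
    apply copz (p := 5)
    rw [hδ]; push_cast; rw [hm]
    have : (T : ZMod 5) - 2304 * T = T * 2 := by
      have : (2304 : ZMod 5) = -1 := dz1
      rw [this]; ring
    rw [this]
    exact mul_ne_zero hT5 dz2
  have cS : IsCoprime δ S := by
    have : δ = T + S * (-2304) := by rw [hδ]; ring
    rw [this]; exact hST.symm.add_mul_left_left _
  have c2304 : IsCoprime (2304 : ℤ) T := by
    have : (2304 : ℤ) = 2 ^ 8 * 3 ^ 2 := by norm_num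
    rw [this]; exact (h2.symm.pow_left).mul_left h3.symm.pow_left
  have cT : IsCoprime δ T := by
    have : δ = -(2304 * S) + T * 1 := by rw [hδ]; ring
    rw [this]; exact ((c2304.mul_left hST).neg_left).add_mul_left_left _
  have cnδ : IsCoprime (pN S T) δ := by
    have : pN S T = (5 ^ 3 * 2 ^ 6 * 3 * S * T) + δ * δ := by rw [hδ]; simp only [pN]; ring
    rw [this]
    refine IsCoprime.add_mul_left_left ?_ _
    exact ((((c5.symm.pow_left).mul_left c2.symm.pow_left).mul_left c3.symm).mul_left cS.symm).mul_left cT.symm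
  have cn2 : IsCoprime (pN S T) 2 := by
    have : pN S T = T ^ 2 + 2 * (101 * 96 * S * T + 1152 * 2304 * S ^ 2) := by simp only [pN]; ring
    rw [this]; exact (h2.pow_left).add_mul_left_left _
  have cn3 : IsCoprime (pN S T) 3 := by
    have : pN S T = T ^ 2 + 3 * (101 * 64 * S * T + 768 * 2304 * S ^ 2) := by simp only [pN]; ring
    rw [this]; exact (h3.pow_left).add_mul_left_left _
  have cnP : IsCoprime (pN S T) (pP S T) := by
    have h16 : IsCoprime (pN S T) (16 * pP S T) := by
      have : 16 * pP S T = 3 ^ 4 * δ ^ 4 + pN S T * (-45 * δ ^ 2 - 20 * pN S T) := by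
        rw [hδ]; simp only [pN, pP]; ring
      rw [this]
      exact ((cn3.pow_right).mul_right cnδ.pow_right).add_mul_left_right _
    exact h16.of_mul_right_right
  have : IsCoprime (pN S T) (2 * pX1 S T) := cn2.mul_right (cnδ.mul_right cnP)
  exact this.symm.pow_right

lemma cop2 (S T : ℤ) (hST : IsCoprime S T) (h2 : IsCoprime T 2) (h3 : IsCoprime T 3)
    (h5 : IsCoprime T 5) (hm : (S : ZMod 5) = T) (h19 : IsCoprime T 19) (hm19 : (S : ZMod 19) = T) :
    IsCoprime (2 * pX2 S T) (pk S T ^ 5) := by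
  have : Fact (Nat.Prime 5) := ⟨by norm_num⟩
  have : Fact (Nat.Prime 19) := ⟨by norm_num⟩
  have hT5 : (T : ZMod 5) ≠ 0 := by
    intro h0
    have h1 : (5 : ℤ) ∣ T := by exact_mod_cast (ZMod.intCast_zmod_eq_zero_iff_dvd T 5).1 h0
    have := h5.isUnit_of_dvd' h1 dvd_rfl
    exact absurd this (by decide)
  have hT19 : (T : ZMod 19) ≠ 0 := by
    intro h0
    have h1 : (19 : ℤ) ∣ T := by exact_mod_cast (ZMod.intCast_zmod_eq_zero_iff_dvd T 19).1 h0
    have := h19.isUnit_of_dvd' h1 dvd_rfl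
    exact absurd this (by decide)
  set δ := T + 2304 * S with hδ
  have c2 : IsCoprime δ 2 := by
    have : δ = T + 2 * (1152 * S) := by rw [hδ]; ring
    rw [this]; exact h2.add_mul_left_left _
  have c3 : IsCoprime δ 3 := by
    have : δ = T + 3 * (768 * S) := by rw [hδ]; ring
    rw [this]; exact h3.add_mul_left_left _
  have c19 : IsCoprime δ 19 := by
    apply copz (p := 19)
    rw [hδ]; push_cast; rw [hm19]
    have : (T : ZMod 19) + 2304 * T = T * 6 := by
      have : (2304 : ZMod 19) = 5 := dz3
      rw [this]; ring
    rw [this]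
    exact mul_ne_zero hT19 dz4
  have cS : IsCoprime δ S := by
    have : δ = T + S * 2304 := by rw [hδ]; ring
    rw [this]; exact hST.symm.add_mul_left_left _
  have c2304 : IsCoprime (2304 : ℤ) T := by
    have : (2304 : ℤ) = 2 ^ 8 * 3 ^ 2 := by norm_num
    rw [this]; exact (h2.symm.pow_left).mul_left h3.symm.pow_left
  have cT : IsCoprime δ T := by
    have : δ = (2304 * S) + T * 1 := by rw [hδ]; ring
    rw [this]; exact (c2304.mul_left hST).add_mul_left_left _
  have cnδ : IsCoprime (pk S T) δ := by
    have : pk S T = (19 * 2 ^ 9 * 3 * S * T) + δ * δ := by rw [hδ]; simp only [pk]; ring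
    rw [this]
    refine IsCoprime.add_mul_left_left ?_ _
    exact ((((c19.symm).mul_left c2.symm.pow_left).mul_left c3.symm).mul_left cS.symm).mul_left cT.symm
  have cn2 : IsCoprime (pk S T) 2 := by
    have : pk S T = T ^ 2 + 2 * (44 * 384 * S * T + 1152 * 2304 * S ^ 2) := by simp only [pk]; ring
    rw [this]; exact (h2.pow_left).add_mul_left_left _
  have cn3 : IsCoprime (pk S T) 3 := by
    have : pk S T = T ^ 2 + 3 * (44 * 256 * S * T + 768 * 2304 * S ^ 2) := by simp only [pk]; ring
    rw [this]; exact (h3.pow_left).add_mul_left_left _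
  have cn5 : IsCoprime (pk S T) 5 := by
    apply copz (p := 5)
    rw [cast_k, hm, diag_k]
    exact mul_ne_zero (pow_ne_zero _ hT5) dz5
  have cnP : IsCoprime (pk S T) (pR S T) := by
    have h16 : IsCoprime (pk S T) (128 * pR S T) := by
      have : 128 * pR S T = 3 * 5 ^ 4 * δ ^ 4 + pk S T * (-2275 * δ ^ 2 + 528 * pk S T) := by
        rw [hδ]; simp only [pk, pR]; ring
      rw [this]
      exact ((cn3.mul_right cn5.pow_right).mul_right cnδ.pow_right).add_mul_left_right _
    exact h16.of_mul_right_right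
  have : IsCoprime (pk S T) (2 * pX2 S T) := cn2.mul_right (cnδ.mul_right cnP)
  exact this.symm.pow_right

section main_alg
variable {K : Type} [Field K] [NumberField K]

lemma exists_D {d : ℤ} (h : ∃ x : K, x * x = (d : K)) : ∃ D : 𝓞 K, D * D = (d : 𝓞 K) := by
  obtain ⟨x, hx⟩ := h
  have hint : IsIntegral ℤ x := by
    refine ⟨Polynomial.X ^ 2 - Polynomial.C d, Polynomial.monic_X_pow_sub_C d (by norm_num), ?_⟩
    rw [Polynomial.eval₂_sub, Polynomial.eval₂_X_pow, Polynomial.eval₂_C, pow_two, hx]; simp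
  obtain ⟨y, hy⟩ := (IsIntegralClosure.isIntegral_iff (A := 𝓞 K)).1 hint
  refine ⟨y, ?_⟩
  apply FaithfulSMul.algebraMap_injective (𝓞 K) K
  rw [map_mul, hy, map_intCast]; exact hx

lemma cop_conj {R : Type*} [CommRing R] {a a' : R} {x n : ℤ} (hs : a + a' = (2 * x : ℤ))
    (hp : a * a' = (n : ℤ)) (h : IsCoprime (2 * x) n) : IsCoprime a a' := by
  obtain ⟨u, v, huv⟩ := h
  refine ⟨(u : R) + v * a', u, ?_⟩
  have h1 : ((u * (2 * x) + v * n : ℤ) : R) = 1 := by rw [huv]; simp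
  rw [Int.cast_add, Int.cast_mul u, Int.cast_mul v, ← hs, ← hp] at h1
  linear_combination h1

lemma copprime {T p : ℕ} (hT : T.Prime) (hp : p.Prime) (h : p < T) : IsCoprime (T : ℤ) (p : ℤ) :=
  Nat.isCoprime_iff_coprime.2 ((Nat.coprime_primes hT hp).2 (by omega))

lemma main_alg (S T : ℕ) (hS : S.Prime) (hT : T.Prime) (hST : S ≠ T) (hT131 : 131 < T)
    (hmod : S ≡ T [MOD 385795]) (d m : ℤ) (hd : d < -16) (hsf : Squarefree d)
    (hdm : d * m ^ 2 = pD (S : ℤ) (T : ℤ)) {D : 𝓞 K} (hD : D * D = (d : 𝓞 K))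
    (hK : Module.finrank ℚ K = 2) :
    ∃ f : Multiplicative (ZMod 5 × ZMod 5) →* ClassGroup (𝓞 K), Function.Injective f := by
  have hmodq : ∀ q : ℕ, q ∣ 385795 → ((S : ℤ) : ZMod q) = ((T : ℤ) : ZMod q) := by
    intro q hq
    have := (ZMod.natCast_eq_natCast_iff S T q).2 (hmod.of_dvd hq)
    simpa using this
  have hTq : ∀ q : ℕ, q.Prime → q < T → ((T : ℤ) : ZMod q) ≠ 0 := by
    intro q hq hlt h0
    have h1 : ((T : ℕ) : ZMod q) = 0 := by simpa using h0
    rw [ZMod.natCast_eq_zero_iff] at h1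
    rcases (Nat.dvd_prime hT).1 h1 with h | h
    · exact hq.one_lt.ne' h
    · omega
  have cST : IsCoprime (S : ℤ) (T : ℤ) :=
    Nat.isCoprime_iff_coprime.2 ((Nat.coprime_primes hS hT).2 hST)
  have k2 : IsCoprime (T : ℤ) 2 := by simpa using copprime hT Nat.prime_two (by omega)
  have k3 : IsCoprime (T : ℤ) 3 := by simpa using copprime hT Nat.prime_three (by omega)
  have k5 : IsCoprime (T : ℤ) 5 := by simpa using copprime hT Nat.prime_five (by omega)
  have k19 : IsCoprime (T : ℤ) 19 := by
    simpa using copprime hT (show Nat.Prime 19 by norm_num) (by omega)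
  have hc1 := cop1 S T cST k2 k3 k5 (hmodq 5 (by norm_num))
  have hc2 := cop2 S T cST k2 k3 k5 (hmodq 5 (by norm_num)) k19 (hmodq 19 (by norm_num))
  have hSpos : (0 : ℤ) < S := by exact_mod_cast hS.pos
  have hTpos : (0 : ℤ) < T := by exact_mod_cast hT.pos
  have hN0 : pN (S : ℤ) T ≠ 0 := by simp only [pN]; positivity
  have hk0 : pk (S : ℤ) T ≠ 0 := by simp only [pk]; positivity
  have id1 := ident1 (S : ℤ) T
  have id2 := ident2 (S : ℤ) T
  rw [← hdm] at id1 id2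
  generalize hx1 : pX1 (S : ℤ) (T : ℤ) = x1 at *
  generalize hy1 : pY1 (S : ℤ) (T : ℤ) = y1 at *
  generalize hx2 : pX2 (S : ℤ) (T : ℤ) = x2 at *
  generalize hy2 : pY2 (S : ℤ) (T : ℤ) = y2 at *
  generalize hn : pN (S : ℤ) (T : ℤ) = n at *
  generalize hk : pk (S : ℤ) (T : ℤ) = k at *
  set a : 𝓞 K := (x1 : 𝓞 K) + ((y1 * m : ℤ) : 𝓞 K) * D with ha
  set a' : 𝓞 K := (x1 : 𝓞 K) - ((y1 * m : ℤ) : 𝓞 K) * D with ha'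
  set b : 𝓞 K := (x2 : 𝓞 K) + ((y2 * m : ℤ) : 𝓞 K) * D with hb
  set b' : 𝓞 K := (x2 : 𝓞 K) - ((y2 * m : ℤ) : 𝓞 K) * D with hb'
  have haa : a * a' = ((n ^ 5 : ℤ) : 𝓞 K) := by
    rw [ha, ha', ← id1]; push_cast
    linear_combination (-(y1 : 𝓞 K) ^ 2 * m ^ 2) * hD
  have hbb : b * b' = ((k ^ 5 : ℤ) : 𝓞 K) := by
    rw [hb, hb', ← id2]; push_cast
    linear_combination (-(y2 : 𝓞 K) ^ 2 * m ^ 2) * hD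
  have ca : IsCoprime a a' := cop_conj (by rw [ha, ha']; push_cast; ring) haa hc1
  have cb : IsCoprime b b' := cop_conj (by rw [hb, hb']; push_cast; ring) hbb hc2
  have ha0 : a ≠ 0 := by
    intro h0
    rw [h0, zero_mul] at haa
    exact pow_ne_zero 5 hN0 (by exact_mod_cast haa.symm)
  have hb0 : b ≠ 0 := by
    intro h0
    rw [h0, zero_mul] at hbb
    exact pow_ne_zero 5 hk0 (by exact_mod_cast hbb.symm)
  refine class_rank (unit_pm hd hsf hD hK) a b a' b' n k ha0 hb0 ca cb
    (by rw [haa]; push_cast; rfl) (by rw [hbb]; push_cast; rfl) ?_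
  rintro i j hi hj ⟨c, hc⟩
  obtain ⟨p, r, N, hpr, -⟩ := int_coords (by omega) hsf hD hK c
  have hZ : 32 * (⟨x1, y1 * m⟩ : ℤ√d) ^ i * (⟨x2, y2 * m⟩ : ℤ√d) ^ j = (⟨p, r⟩ : ℤ√d) ^ 5 := by
    apply Zsqrtd.lift_injective (⟨D, hD⟩ : { r : 𝓞 K // r * r = ↑d })
      (fun n h => by nlinarith [mul_self_nonneg n])
    simp only [map_mul, map_pow, Zsqrtd.lift_apply_apply, map_ofNat]
    rw [← hpr, ← ha, ← hb, mul_assoc, hc]; ring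
  subst hx1 hy1 hx2 hy2
  have f31 : Fact (Nat.Prime 31) := ⟨by norm_num⟩
  have f131 : Fact (Nat.Prime 131) := ⟨by norm_num⟩
  have r31 := char31 i j hi hj (red 31 dec31g 5 dec31e dec31f S T d m (hmodq 31 (by norm_num))
    (hTq 31 (by norm_num) (by omega)) hdm i j _ hZ)
  have r131 := char131 i j hi hj (red 131 dec131g 61 dec131e dec131f S T d m
    (hmodq 131 (by norm_num)) (hTq 131 (by norm_num) (by omega)) hdm i j _ hZ)
  omega

/-- The discriminant is at most `4 |d|`. -/
lemma discr_le {d : ℤ} (hd : d < 0) {D : 𝓞 K} (hD : D * D = (d : 𝓞 K))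
    (hK : Module.finrank ℚ K = 2) : |NumberField.discr K| ≤ 4 * |d| := by
  obtain ⟨k, hk⟩ := discr_rel hd hD hK
  have hk0 : k ≠ 0 := by rintro rfl; simp at hk; omega
  have h1 : 1 ≤ k ^ 2 := by have := sq_pos_of_ne_zero hk0; omega
  have h2 : 4 * |d| = |NumberField.discr K| * k ^ 2 := by
    rw [← abs_of_nonneg (sq_nonneg k), ← abs_mul, ← hk, abs_mul]; norm_num
  rw [h2]
  nlinarith [abs_nonneg (NumberField.discr K)]

lemma le_discr {d : ℤ} (hd : d < 0) (hsf : Squarefree d) {D : 𝓞 K} (hD : D * D = (d : 𝓞 K))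
    (hK : Module.finrank ℚ K = 2) : |d| ≤ |NumberField.discr K| := by
  obtain ⟨k, hk⟩ := discr_rel hd hD hK
  have h2 : 4 * |d| = |NumberField.discr K| * k ^ 2 := by
    rw [← abs_of_nonneg (sq_nonneg k), ← abs_mul, ← hk, abs_mul]; norm_num
  have h4 : k ^ 2 ≤ 4 := by
    -- `2 / k` has square times `d` integral
    have hk0 : k ≠ 0 := by rintro rfl; simp at hk; omega
    have hkq : (k : ℚ) ≠ 0 := by exact_mod_cast hk0
    obtain ⟨c, hc⟩ := rat_int_of_sq_mul d hsf (2 / k) (NumberField.discr K) (by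
      have : (4 * d : ℚ) = NumberField.discr K * k ^ 2 := by exact_mod_cast hk
      field_simp
      linear_combination this)
    have : (2 : ℚ) = c * k := by rw [← hc]; field_simp
    have h5 : (2 : ℤ) = c * k := by exact_mod_cast this
    have h6 : k ∣ 2 := ⟨c, by rw [h5]; ring⟩
    have h7 : |k| ≤ 2 := by
      have := Int.le_of_dvd (by norm_num) ((abs_dvd k 2).2 h6)
      exact this
    nlinarith [sq_abs k, abs_nonneg k]
  nlinarith [abs_nonneg (NumberField.discr K)]

end main_alg

lemma exists_K (d : ℤ) (hd : d < 0) : ∃ (K : Type) (_ : Field K) (_ : NumberField K),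
    (∃ x : K, x * x = (d : K)) ∧ Module.finrank ℚ K = 2 := by
  let p : Polynomial ℚ := Polynomial.X ^ 2 - Polynomial.C (d : ℚ)
  have hdeg : p.natDegree = 2 := Polynomial.natDegree_X_pow_sub_C
  have hirr : Irreducible p := by
    apply Polynomial.irreducible_of_degree_le_three_of_not_isRoot
    · rw [hdeg]; decide
    · intro x hx
      have : x ^ 2 - d = 0 := by simpa [p] using hx
      have hdq : (d : ℚ) < 0 := by exact_mod_cast hd
      nlinarith [sq_nonneg x]
  have : Fact (Irreducible p) := ⟨hirr⟩
  have hfd : FiniteDimensional ℚ (AdjoinRoot p) := (AdjoinRoot.powerBasis hirr.ne_zero).finite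
  refine ⟨AdjoinRoot p, inferInstance, ⟨⟩, ⟨AdjoinRoot.root p, ?_⟩, ?_⟩
  · have h := AdjoinRoot.eval₂_root p
    rw [Polynomial.eval₂_sub, Polynomial.eval₂_X_pow, Polynomial.eval₂_C, map_intCast] at h
    linear_combination h
  · rw [(AdjoinRoot.powerBasis hirr.ne_zero).finrank, AdjoinRoot.powerBasis_dim, hdeg]

lemma good_finite (X : ℝ) : {d : ℤ | GoodRank5sq X d}.Finite := by
  apply (Set.finite_Icc (-⌈X⌉) 0).subset
  rintro d ⟨hd, hsf, h⟩
  obtain ⟨K, _, _, hx, hK⟩ := exists_K d hd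
  obtain ⟨D, hD⟩ := exists_D hx
  have h1 := (h K hx hK).1
  have h2 := le_discr hd hsf hD hK
  have h3 : ((|d| : ℤ) : ℝ) ≤ X := le_trans (by exact_mod_cast h2) h1
  have h4 : |d| ≤ ⌈X⌉ := by exact_mod_cast h3.trans (Int.le_ceil X)
  rw [abs_of_neg hd] at h4
  constructor <;> omega

lemma good_of (S T : ℕ) (hS : S.Prime) (hT : T.Prime) (hST : S ≠ T) (hT131 : 131 < T)
    (hmod : S ≡ T [MOD 385795]) (d m : ℤ) (hd : d < -16) (hsf : Squarefree d)
    (hdm : d * m ^ 2 = pD (S : ℤ) (T : ℤ)) (X : ℝ) (hX : ((4 * |d| : ℤ) : ℝ) ≤ X) :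
    GoodRank5sq X d := by
  refine ⟨by omega, hsf, ?_⟩
  intro K _ _ hx hK
  obtain ⟨D, hD⟩ := exists_D hx
  refine ⟨le_trans ?_ hX, main_alg S T hS hT hST hT131 hmod d m hd hsf hdm hD hK⟩
  exact_mod_cast discr_le (by omega) hD hK

lemma exists_d (S T : ℕ) (hS : S.Prime) (hT : T.Prime) (hST : S ≠ T) (hS3 : 131 < S)
    (hT3 : 131 < T) : ∃ d m : ℤ, d < -16 ∧ Squarefree d ∧ d * m ^ 2 = pD (S : ℤ) (T : ℤ) ∧
      (S : ℤ) ∣ d ∧ (T : ℤ) ∣ d ∧ |d| ≤ |pD (S : ℤ) (T : ℤ)| := by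
  set Q : ℕ := T ^ 4 + 5034 * S * T ^ 3 + 5162 * 4608 * S ^ 2 * T ^ 2
    + 5034 * 2304 ^ 2 * S ^ 3 * T + 2304 ^ 4 * S ^ 4 with hQ
  have hSp := hS.pos
  have hTp := hT.pos
  have hQp : 0 < Q := by positivity
  have hND : pD (S : ℤ) (T : ℤ) = -((6 * S * T * Q : ℕ) : ℤ) := by
    simp only [pD, hQ]; push_cast; ring
  obtain ⟨a, b, ha, hb, hab, hsf⟩ :=
    Nat.sq_mul_squarefree_of_pos (show 0 < 6 * S * T * Q by positivity)
  have hno6 : ∀ p : ℕ, p.Prime → 131 < p → ¬ p ∣ 6 := by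
    intro p hp h3 h
    have := Nat.le_of_dvd (by norm_num) h
    omega
  have hno2304 : ∀ p : ℕ, p.Prime → 131 < p → ¬ p ∣ 2304 := by
    intro p hp h3 h
    have h6 : p ∣ 2 ^ 8 * 3 ^ 2 := h
    rcases hp.dvd_mul.1 h6 with h | h
    · have := Nat.le_of_dvd (by norm_num) (hp.dvd_of_dvd_pow h); omega
    · have := Nat.le_of_dvd (by norm_num) (hp.dvd_of_dvd_pow h); omega
  have hSa : S ∣ a := by
    have h1 : S ∣ b ^ 2 * a := by rw [hab]; exact ⟨6 * T * Q, by ring⟩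
    rcases hS.dvd_mul.1 h1 with h | h
    · exfalso
      obtain ⟨c, rfl⟩ := hS.dvd_of_dvd_pow h
      have h2 : S * (S * c ^ 2 * a) = S * (6 * T * Q) := by
        calc _ = (S * c) ^ 2 * a := by ring
          _ = _ := by rw [hab]; ring
      have h3 : S ∣ 6 * T * Q := ⟨c ^ 2 * a, by
        rw [← Nat.eq_of_mul_eq_mul_left hSp h2]; ring⟩
      rcases hS.dvd_mul.1 h3 with h4 | h4
      · rcases hS.dvd_mul.1 h4 with h5 | h5
        · exact hno6 S hS hS3 h5
        · exact hST ((Nat.prime_dvd_prime_iff_eq hS hT).1 h5)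
      · have h5 : Q = S * (5034 * T ^ 3 + 5162 * 4608 * S * T ^ 2
            + 5034 * 2304 ^ 2 * S ^ 2 * T + 2304 ^ 4 * S ^ 3) + T ^ 4 := by rw [hQ]; ring
        rw [h5] at h4
        have h6 := (Nat.dvd_add_right (Dvd.intro _ rfl)).1 h4
        exact hST ((Nat.prime_dvd_prime_iff_eq hS hT).1 (hS.dvd_of_dvd_pow h6))
    · exact h
  have hTa : T ∣ a := by
    have h1 : T ∣ b ^ 2 * a := by rw [hab]; exact ⟨6 * S * Q, by ring⟩
    rcases hT.dvd_mul.1 h1 with h | h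
    · exfalso
      obtain ⟨c, rfl⟩ := hT.dvd_of_dvd_pow h
      have h2 : T * (T * c ^ 2 * a) = T * (6 * S * Q) := by
        calc _ = (T * c) ^ 2 * a := by ring
          _ = _ := by rw [hab]; ring
      have h3 : T ∣ 6 * S * Q := ⟨c ^ 2 * a, by
        rw [← Nat.eq_of_mul_eq_mul_left hTp h2]; ring⟩
      rcases hT.dvd_mul.1 h3 with h4 | h4
      · rcases hT.dvd_mul.1 h4 with h5 | h5
        · exact hno6 T hT hT3 h5
        · exact hST ((Nat.prime_dvd_prime_iff_eq hT hS).1 h5).symm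
      · have h5 : Q = T * (T ^ 3 + 5034 * S * T ^ 2 + 5162 * 4608 * S ^ 2 * T
            + 5034 * 2304 ^ 2 * S ^ 3) + 2304 ^ 4 * S ^ 4 := by rw [hQ]; ring
        rw [h5] at h4
        have h6 := (Nat.dvd_add_right (Dvd.intro _ rfl)).1 h4
        rcases hT.dvd_mul.1 h6 with h7 | h7
        · exact hno2304 T hT hT3 (hT.dvd_of_dvd_pow h7)
        · exact hST ((Nat.prime_dvd_prime_iff_eq hT hS).1 (hT.dvd_of_dvd_pow h7)).symm
    · exact h
  have haS := Nat.le_of_dvd ha hSa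
  refine ⟨-(a : ℤ), b, by omega, ?_, ?_, ?_, ?_, ?_⟩
  · rw [← Int.squarefree_natAbs]; simpa using hsf
  · rw [hND, ← hab]; push_cast; ring
  · exact (dvd_neg).2 (by exact_mod_cast hSa)
  · exact (dvd_neg).2 (by exact_mod_cast hTa)
  · rw [hND, abs_neg, abs_neg, Nat.abs_cast, Nat.abs_cast, ← hab]
    have : 1 ≤ b ^ 2 := Nat.one_le_pow _ _ hb
    exact_mod_cast Nat.le_mul_of_pos_left a this

lemma pD_le (S T n : ℕ) (hS : S ≤ n) (hT : T ≤ n) :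
    |pD (S : ℤ) (T : ℤ)| ≤ 169236160720386 * (n : ℤ) ^ 6 := by
  have hND : pD (S : ℤ) (T : ℤ) = -((6 * S * T * (T ^ 4 + 5034 * S * T ^ 3
      + 5162 * 4608 * S ^ 2 * T ^ 2
      + 5034 * 2304 ^ 2 * S ^ 3 * T + 2304 ^ 4 * S ^ 4) : ℕ) : ℤ) := by
    simp only [pD]; push_cast; ring
  rw [hND, abs_neg, Nat.abs_cast]
  have : 6 * S * T * (T ^ 4 + 5034 * S * T ^ 3
      + 5162 * 4608 * S ^ 2 * T ^ 2
      + 5034 * 2304 ^ 2 * S ^ 3 * T + 2304 ^ 4 * S ^ 4) ≤ 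
      6 * n * n * (n ^ 4 + 5034 * n * n ^ 3
      + 5162 * 4608 * n ^ 2 * n ^ 2
      + 5034 * 2304 ^ 2 * n ^ 3 * n + 2304 ^ 4 * n ^ 4) := by gcongr
  have h2 : 6 * n * n * (n ^ 4 + 5034 * n * n ^ 3
      + 5162 * 4608 * n ^ 2 * n ^ 2
      + 5034 * 2304 ^ 2 * n ^ 3 * n + 2304 ^ 4 * n ^ 4) = 169236160720386 * n ^ 6 := by ring
  rw [h2] at this
  exact_mod_cast this

/-- primes in `(√n, n]` -/
def bigP (n : ℕ) : Finset ℕ := (Finset.range (n + 1)).filter (fun p => p.Prime ∧ n < p ^ 2)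

lemma few_divisors (n : ℕ) (hn : 169236160720386 ^ 2 < n) (d : ℤ) (hd0 : d ≠ 0)
    (hd : |d| ≤ 169236160720386 * (n : ℤ) ^ 6) :
    ((bigP n).filter (fun p : ℕ => (p : ℤ) ∣ d)).card ≤ 12 := by
  set W := (bigP n).filter (fun p : ℕ => (p : ℤ) ∣ d) with hW
  have hmem : ∀ p ∈ W, p.Prime ∧ n < p ^ 2 ∧ p ∣ d.natAbs := by
    intro p hp
    simp only [hW, bigP, Finset.mem_filter] at hp
    exact ⟨hp.1.2.1, hp.1.2.2, Int.natCast_dvd.1 hp.2⟩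
  have hdvd : ∏ p ∈ W, p ∣ d.natAbs := by
    apply Finset.prod_primes_dvd
    · intro p hp; exact (hmem p hp).1.prime
    · intro p hp; exact (hmem p hp).2.2
  have hle := Nat.le_of_dvd (Int.natAbs_pos.2 hd0) hdvd
  have hd' : d.natAbs ≤ 169236160720386 * n ^ 6 := by zify; exact hd
  have h1 : n ^ W.card ≤ (∏ p ∈ W, p) ^ 2 := by
    rw [← Finset.prod_pow, ← Finset.prod_const]
    exact Finset.prod_le_prod' (fun p hp => (hmem p hp).2.1.le)
  have h2 : n ^ W.card ≤ 169236160720386 ^ 2 * n ^ 12 := by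
    calc n ^ W.card ≤ (∏ p ∈ W, p) ^ 2 := h1
      _ ≤ (169236160720386 * n ^ 6) ^ 2 := Nat.pow_le_pow_left (hle.trans hd') 2
      _ = _ := by ring
  have hn0 : 0 < n := by omega
  by_contra! hcon
  have h3 : n ^ 13 ≤ n ^ W.card := Nat.pow_le_pow_right hn0 hcon
  have h4 : 169236160720386 ^ 2 * n ^ 12 < n * n ^ 12 :=
    Nat.mul_lt_mul_of_pos_right hn (by positivity)
  have h5 : n * n ^ 12 = n ^ 13 := by ring
  omega

lemma combin (n : ℕ) (hn : 169236160720386 ^ 2 < n) (X : ℝ)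
    (hX : 4 * 169236160720386 * (n : ℝ) ^ 6 ≤ X) :
    ∃ q : ℕ, q = (bigP n).card / 385795 ∧
      q * q - q ≤ 169 * {d : ℤ | GoodRank5sq X d}.ncard := by
  refine ⟨_, rfl, ?_⟩
  have hpm : ∀ p ∈ bigP n, p.Prime ∧ 131 < p ∧ p ≤ n := by
    intro p hp
    simp only [bigP, Finset.mem_filter, Finset.mem_range] at hp
    refine ⟨hp.2.1, ?_, by omega⟩
    by_contra! h
    have : p ^ 2 ≤ 131 ^ 2 := Nat.pow_le_pow_left h 2
    omega
  obtain ⟨y, -, hy⟩ := Finset.exists_le_card_fiber_of_mul_le_card_of_maps_to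
    (s := bigP n) (t := Finset.range 385795) (f := fun p => p % 385795)
    (n := (bigP n).card / 385795)
    (fun p _ => Finset.mem_range.2 (Nat.mod_lt _ (by norm_num)))
    ⟨0, by simp⟩ (by rw [Finset.card_range]; exact Nat.mul_div_le _ _)
  set q := (bigP n).card / 385795 with hq
  set P := (bigP n).filter (fun p => p % 385795 = y) with hP
  have hPm : ∀ p ∈ P, p ∈ bigP n ∧ p % 385795 = y := by
    intro p hp; simpa [hP] using hp
  have key : ∀ z : ℕ × ℕ, ∃ d : ℤ, z ∈ P.offDiag → GoodRank5sq X d ∧ (z.1 : ℤ) ∣ d ∧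
      (z.2 : ℤ) ∣ d ∧ d ≠ 0 ∧ |d| ≤ 169236160720386 * (n : ℤ) ^ 6 := by
    rintro ⟨S, T⟩
    by_cases hz : (S, T) ∈ P.offDiag
    · rw [Finset.mem_offDiag] at hz
      obtain ⟨hS, hT, hne⟩ := hz
      obtain ⟨pS, S1, Sn⟩ := hpm S (hPm S hS).1
      obtain ⟨pT, T1, Tn⟩ := hpm T (hPm T hT).1
      obtain ⟨d, m, h1, h2, h3, h4, h5, h6⟩ := exists_d S T pS pT hne S1 T1
      have h7 := h6.trans (pD_le S T n Sn Tn)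
      refine ⟨d, fun _ => ⟨?_, h4, h5, by omega, h7⟩⟩
      refine good_of S T pS pT hne T1 ?_ d m h1 h2 h3 X (le_trans ?_ hX)
      · exact ((hPm S hS).2).trans (hPm T hT).2.symm
      · have h8 : 4 * |d| ≤ 4 * 169236160720386 * (n : ℤ) ^ 6 := by linarith
        exact_mod_cast h8
    · exact ⟨0, fun h => absurd h hz⟩
  choose g hg using key
  have hfib := Finset.card_le_mul_card_image (f := g) P.offDiag 169 (by
    intro d hd
    obtain ⟨z, hz, rfl⟩ := Finset.mem_image.1 hd
    obtain ⟨-, -, -, h0, hb⟩ := hg z hz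
    have hW := few_divisors n hn (g z) h0 hb
    set W := (bigP n).filter (fun p : ℕ => (p : ℤ) ∣ g z)
    have hsub : P.offDiag.filter (fun x => g x = g z) ⊆ W ×ˢ W := by
      rintro x hx
      obtain ⟨hx1, hx2⟩ := Finset.mem_filter.1 hx
      obtain ⟨-, e1, e2, -, -⟩ := hg x hx1
      rw [hx2] at e1 e2
      rw [Finset.mem_offDiag] at hx1
      exact Finset.mem_product.2 ⟨Finset.mem_filter.2 ⟨(hPm _ hx1.1).1, e1⟩,
        Finset.mem_filter.2 ⟨(hPm _ hx1.2.1).1, e2⟩⟩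
    calc _ ≤ (W ×ˢ W).card := Finset.card_le_card hsub
      _ = W.card * W.card := Finset.card_product _ _
      _ ≤ 12 * 12 := Nat.mul_le_mul hW hW
      _ ≤ 169 := by norm_num)
  have himg : (P.offDiag.image g).card ≤ {d : ℤ | GoodRank5sq X d}.ncard := by
    rw [← Set.ncard_coe_finset]
    apply Set.ncard_le_ncard _ (good_finite X)
    intro d hd
    obtain ⟨z, hz, rfl⟩ := Finset.mem_image.1 (Finset.mem_coe.1 hd)
    exact (hg z hz).1
  rw [Finset.offDiag_card] at hfib
  have hmono : q * q - q ≤ P.card * P.card - P.card := by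
    rw [← Nat.mul_sub_one, ← Nat.mul_sub_one]
    exact Nat.mul_le_mul hy (by omega)
  calc _ ≤ _ := hmono
    _ ≤ _ := hfib
    _ ≤ _ := Nat.mul_le_mul_left _ himg

open Filter Asymptotics in
lemma bigP_lower : ∀ᶠ n : ℕ in atTop, (n : ℝ) / (4 * Real.log n) ≤ ((bigP n).card : ℝ) := by
  have h1 : ∀ᶠ x : ℝ in atTop, Real.log (x + 1) + √x * Real.log x ≤ (1 / 4) * x := by
    have hl := (isLittleO_log_rpow_atTop (show (0 : ℝ) < 1 / 4 by norm_num)).bound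
      (show (0 : ℝ) < 1 by norm_num)
    have ht : Tendsto (fun x : ℝ => x ^ ((1 : ℝ) / 4)) atTop atTop :=
      tendsto_rpow_atTop (by norm_num)
    filter_upwards [hl, ht.eventually_ge_atTop 12, eventually_ge_atTop (1 : ℝ)] with x hx ht hx1
    set t := x ^ ((1 : ℝ) / 4) with htd
    have hx0 : 0 ≤ x := by linarith
    have hxt : x = t ^ 4 := by
      rw [htd, ← Real.rpow_natCast, ← Real.rpow_mul hx0]; norm_num
    have hlog : Real.log x ≤ t := by
      have h0 := Real.log_nonneg hx1
      simpa [abs_of_nonneg h0, abs_of_nonneg (show (0 : ℝ) ≤ t by linarith)] using hx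
    have hs : √x = t ^ 2 := by
      rw [hxt, show t ^ 4 = (t ^ 2) ^ 2 by ring, Real.sqrt_sq (by positivity)]
    have hlog2 : Real.log (x + 1) ≤ Real.log x + 1 := by
      have h2 : Real.log (x + 1) ≤ Real.log (2 * x) := Real.log_le_log (by linarith) (by linarith)
      rw [Real.log_mul (by norm_num) (by linarith)] at h2
      have := Real.log_two_lt_d9
      linarith
    rw [hs]
    have h3 : t ^ 2 * Real.log x ≤ t ^ 2 * t := by gcongr
    have h4 : 12 * t ^ 3 ≤ t * t ^ 3 := by gcongr
    have h5 : t ≤ t ^ 3 := by nlinarith [sq_nonneg t]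
    have h6 : t ^ 4 = t * t ^ 3 := by ring
    have h7 : t ^ 2 * t = t ^ 3 := by ring
    rw [hxt, h6]
    rw [hxt] at h3 hlog2 hlog
    rw [h6] at h3 hlog2 hlog
    linarith
  have h2 := tendsto_natCast_atTop_atTop (R := ℝ) |>.eventually h1
  filter_upwards [h2, eventually_ge_atTop 3] with n hn hn3
  have hpi := Chebyshev.pi_ge n
  have hlog : 0 < Real.log n := Real.log_pos (by exact_mod_cast (by omega : 1 < n))
  have hcard : Nat.primeCounting n ≤ (bigP n).card + Nat.sqrt n := by
    rw [Nat.primeCounting, Nat.primeCounting', Nat.count_eq_card_filter_range]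
    have hsub : (Finset.range (n + 1)).filter Nat.Prime ⊆ bigP n ∪ Finset.Icc 1 (Nat.sqrt n) := by
      intro p hp
      obtain ⟨hp1, hp2⟩ := Finset.mem_filter.1 hp
      by_cases h : n < p ^ 2
      · exact Finset.mem_union_left _ (Finset.mem_filter.2 ⟨hp1, hp2, h⟩)
      · refine Finset.mem_union_right _ (Finset.mem_Icc.2 ⟨hp2.pos, ?_⟩)
        rw [Nat.le_sqrt']; omega
    calc _ ≤ _ := Finset.card_le_card hsub
      _ ≤ _ := Finset.card_union_le _ _
      _ = _ := by simp
  have hcard' : (Nat.primeCounting n : ℝ) ≤ (bigP n).card + √(n : ℝ) := by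
    have h3 : (Nat.primeCounting n : ℝ) ≤ (bigP n).card + (Nat.sqrt n : ℕ) := by exact_mod_cast hcard
    have h4 : ((Nat.sqrt n : ℕ) : ℝ) ≤ √(n : ℝ) := Real.nat_sqrt_le_real_sqrt
    linarith
  have h5 := hpi.trans hcard'
  rw [div_le_iff₀ hlog] at h5
  rw [div_le_iff₀ (by positivity)]
  have := Real.log_two_gt_d9
  have hnn : (0 : ℝ) ≤ n := by positivity
  nlinarith

open Filter in
lemma main_count :
    ∃ c : ℝ, 0 < c ∧ ∃ X₀ : ℝ, ∀ X : ℝ, X₀ ≤ X →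
      c * X ^ ((1 : ℝ) / 3) / (Real.log X) ^ 2 ≤ ({d : ℤ | GoodRank5sq X d}.ncard : ℝ) := by
  set C : ℝ := 4 * 169236160720386 with hC
  have hCpos : 0 < C := by norm_num [hC]
  set κ : ℝ := 1 / (338 * (8 * 385795) ^ 2) with hκ
  have hκpos : 0 < κ := by positivity
  refine ⟨κ * (1 / 4 * (1 / C) ^ ((1 : ℝ) / 3)), by positivity, ?_⟩
  rw [← eventually_atTop]
  have hbig : ∀ᶠ n : ℕ in atTop, (4 * 385795 : ℝ) ≤ (bigP n).card := by
    have h1 : Tendsto (fun n : ℕ => (n : ℝ) / (4 * Real.log n)) atTop atTop := by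
      have h2 : Tendsto (fun x : ℝ => x / Real.log x) atTop atTop := by
        have h3 : Tendsto (fun x : ℝ => Real.exp x / x ^ 1) atTop atTop :=
          Real.tendsto_exp_div_pow_atTop 1
        refine (h3.comp Real.tendsto_log_atTop).congr' ?_
        filter_upwards [eventually_gt_atTop 0] with x hx
        simp [Real.exp_log hx]
      have h4 := (h2.comp (tendsto_natCast_atTop_atTop (R := ℝ))).const_mul_atTop
        (show (0 : ℝ) < 1 / 4 by norm_num)
      refine h4.congr ?_
      intro n; simp only [Function.comp]; ring
    filter_upwards [bigP_lower, h1.eventually_ge_atTop (4 * 385795)] with n h2 h3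
    exact h3.trans h2
  have hy : Tendsto (fun X : ℝ => (X / C) ^ ((1 : ℝ) / 6)) atTop atTop :=
    (tendsto_rpow_atTop (by norm_num)).comp (tendsto_id.atTop_div_const hCpos)
  have hn : Tendsto (fun X : ℝ => ⌊(X / C) ^ ((1 : ℝ) / 6)⌋₊) atTop atTop :=
    tendsto_nat_floor_atTop.comp hy
  filter_upwards [hn.eventually bigP_lower, hn.eventually hbig,
    hn.eventually_gt_atTop (169236160720386 ^ 2), eventually_ge_atTop (3 : ℝ),
    hy.eventually_ge_atTop 1] with X h1 h2 h3 hX3 hy1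
  have hX0 : 0 ≤ X := by linarith
  set y : ℝ := (X / C) ^ ((1 : ℝ) / 6) with hyd
  set n : ℕ := ⌊y⌋₊ with hnd
  have hny : (n : ℝ) ≤ y := Nat.floor_le (by linarith)
  have hyn : y < n + 1 := Nat.lt_floor_add_one y
  have hy6 : y ^ 6 = X / C := by
    rw [hyd, ← Real.rpow_natCast, ← Real.rpow_mul (by positivity)]; norm_num
  have hy2 : y ^ 2 = (1 / C) ^ ((1 : ℝ) / 3) * X ^ ((1 : ℝ) / 3) := by
    rw [hyd, ← Real.rpow_natCast, ← Real.rpow_mul (by positivity),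
      ← Real.mul_rpow (by positivity) hX0]
    congr 1
    · ring
    · norm_num
  have hn1 : (1 : ℝ) ≤ n := by exact_mod_cast (by omega : 1 ≤ n)
  have hn6 : 4 * 169236160720386 * (n : ℝ) ^ 6 ≤ X := by
    have h4 : (n : ℝ) ^ 6 ≤ y ^ 6 := by gcongr
    rw [hy6, le_div_iff₀ hCpos] at h4
    rw [← hC]; linarith
  have hnX : (n : ℝ) ≤ X := by
    have h4 : (n : ℝ) ≤ n ^ 6 := le_self_pow₀ hn1 (by norm_num)
    have h5 : (0 : ℝ) ≤ (n : ℝ) ^ 6 := by positivity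
    linarith
  have hlogn : 0 < Real.log n := by
    apply Real.log_pos; exact_mod_cast (by omega : 1 < n)
  have hlogX : Real.log n ≤ Real.log X := Real.log_le_log (by linarith) hnX
  obtain ⟨q, hq, hqq⟩ := combin n h3 X hn6
  set R : ℕ := {d : ℤ | GoodRank5sq X d}.ncard with hR
  have hqlow : (bigP n).card < 385795 * q + 385795 := by omega
  have hqlow' : ((bigP n).card : ℝ) < 385795 * q + 385795 := by exact_mod_cast hqlow
  have hq2 : (2 : ℝ) ≤ q := by
    have : 2 ≤ q := by
      have : 4 * 385795 ≤ (bigP n).card := by exact_mod_cast h2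
      omega
    exact_mod_cast this
  have hqq' : (q : ℝ) * q - q ≤ 169 * R := by
    have : q * q ≤ 169 * R + q := by omega
    have : (q : ℝ) * q ≤ 169 * R + q := by exact_mod_cast this
    linarith
  have hR1 : (q : ℝ) ^ 2 / 338 ≤ R := by nlinarith
  have hqc : (n : ℝ) / (4 * Real.log n) / (2 * 385795) ≤ q := by
    rw [div_le_iff₀ (by norm_num)]
    linarith
  have hqL : y / Real.log X / (8 * 385795) * (1 / 2) ≤ q := by
    refine le_trans ?_ hqc
    have e1 : (n : ℝ) / (4 * Real.log n) / (2 * 385795) = n / Real.log n / (8 * 385795) := by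
      field_simp; norm_num
    rw [e1]
    have e2 : y / 2 ≤ n := by linarith
    calc y / Real.log X / (8 * 385795) * (1 / 2) = (y / 2) / Real.log X / (8 * 385795) := by ring
      _ ≤ n / Real.log n / (8 * 385795) := by gcongr
  have hLpos : 0 < Real.log X := by linarith
  calc κ * (1 / 4 * (1 / C) ^ ((1 : ℝ) / 3)) * X ^ ((1 : ℝ) / 3) / Real.log X ^ 2
      = κ * (1 / 4) * y ^ 2 / Real.log X ^ 2 := by rw [hy2]; ring
    _ = (y / Real.log X / (8 * 385795) * (1 / 2)) ^ 2 / 338 := by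
        rw [hκ]; field_simp; norm_num
    _ ≤ (q : ℝ) ^ 2 / 338 := by gcongr
    _ ≤ R := hR1

/-- There are `≫ X^(1/3)/(log X)²` imaginary quadratic fields with `|d_k| ≤ X`
whose ideal class group has 5-rank at least 2. -/
theorem count_imag_quad_5rank_two :
    ∃ c : ℝ, 0 < c ∧ ∃ X₀ : ℝ, ∀ X : ℝ, X₀ ≤ X →
      c * X ^ ((1 : ℝ) / 3) / (Real.log X) ^ 2 ≤ ({d : ℤ | GoodRank5sq X d}.ncard : ℝ) := by
  exact main_count
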